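/- Let b, m, n be positive integers. The number of tuples (a_0, …, a_{m−1}, b_0, …, b_{2n−1}) of integers with 0 ≤ a_r ≤ b−1 for every r ∈ {0, …, m−1}, 0 ≤ b_s ≤ min{a_0, …, a_{m−1}} for every s ∈ {0, …, n−1}, and 0 ≤ b_s ≤ min{b−1−a_0, …, b−1−a_{m−1}} for every s ∈ {n, …, 2n−1}, equals Σ_{i=0}^{b−1} ((b−i)(i+1))^n + Σ_{1 ≤ j ≤ i ≤ b−1} ((j+1)^m − 2j^m + (j−1)^m)((b−i)(i−j+1))^n. -/

import Mathlib

/-!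
Once the entries `a_r` are chosen, the admissible `b_s` depend only on `u = min a_r` and
`v = max a_r`: each of the first `n` has `u + 1` values and each of the last `n` has `b - v`.
The tuples `a` with minimum `u` and maximum `v` are those with entries in `[u, v]` that attain
both `u` and `v`: by inclusion–exclusion there are `(j + 1) ^ m - 2 * j ^ m + (j - 1) ^ m` of
them if `j = v - u > 0`, and there is one if `j = 0`.
-/

open Finset

section MinMax

variable {ι α : Type*} [Fintype ι] [DecidableEq ι] [Nonempty ι] [LinearOrder α]
  [LocallyFiniteOrder α]

theorem filter_inf'_sup'_eq_sdiff {s : Finset α} {u v : α} (hs : Icc u v ⊆ s) :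
    {a ∈ Fintype.piFinset fun _ : ι => s |
      univ.inf' univ_nonempty a = u ∧ univ.sup' univ_nonempty a = v} =
      (Fintype.piFinset fun _ => Icc u v) \
        ((Fintype.piFinset fun _ => Ioc u v) ∪ Fintype.piFinset fun _ => Ico u v) := by
  ext a
  have le_min : (∀ r, u ≤ a r) ↔ u ≤ univ.inf' univ_nonempty a := by simp
  have lt_min : (∀ r, u < a r) ↔ u < univ.inf' univ_nonempty a := by simp
  have max_le : (∀ r, a r ≤ v) ↔ univ.sup' univ_nonempty a ≤ v := by simp
  have max_lt : (∀ r, a r < v) ↔ univ.sup' univ_nonempty a < v := by simp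
  have mem_s (hu : u ≤ univ.inf' univ_nonempty a) (hv : univ.sup' univ_nonempty a ≤ v) (r : ι) :
      a r ∈ s := hs (mem_Icc.2 ⟨le_min.2 hu r, max_le.2 hv r⟩)
  simp only [mem_filter, mem_sdiff, mem_union, Fintype.mem_piFinset, mem_Icc, mem_Ioc, mem_Ico,
    forall_and, le_min, lt_min, max_le, max_lt]
  grind

theorem card_filter_inf'_sup' (R : Type*) [Ring R] {s : Finset α} {u v : α} (hs : Icc u v ⊆ s) :
    (#{a ∈ Fintype.piFinset fun _ : ι => s |
        univ.inf' univ_nonempty a = u ∧ univ.sup' univ_nonempty a = v} : R) =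
      #(Icc u v) ^ Fintype.card ι -
        (#(Ioc u v) ^ Fintype.card ι + #(Ico u v) ^ Fintype.card ι -
          #(Ioo u v) ^ Fintype.card ι) := by
  have Ioc_inter_Ico : Ioc u v ∩ Ico u v = Ioo u v := by grind
  rw [filter_inf'_sup'_eq_sdiff hs, cast_card_sdiff, cast_card_union, ← Fintype.piFinset_inter]
  · simp only [Ioc_inter_Ico, Fintype.card_piFinset, prod_const, card_univ, Nat.cast_pow]
  · exact union_subset (Fintype.piFinset_subset _ _ fun _ => Ioc_subset_Icc_self)
      (Fintype.piFinset_subset _ _ fun _ => Ico_subset_Icc_self)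

theorem card_filter_inf'_eq_sup' {s : Finset α} {v : α} (hv : v ∈ s) :
    #{a ∈ Fintype.piFinset fun _ : ι => s |
      univ.inf' univ_nonempty a = v ∧ univ.sup' univ_nonempty a = v} = 1 := by
  have := card_filter_inf'_sup' (ι := ι) ℤ (u := v) (v := v) (by simpa using hv)
  simpa using this

end MinMax

section MinMaxNat

variable {ι : Type*} [Fintype ι] [DecidableEq ι] [Nonempty ι]

theorem card_filter_inf'_sup'_add (R : Type*) [Ring R] {s : Finset ℕ} {u j : ℕ} (hj : 0 < j)
    (hs : Icc u (u + j) ⊆ s) :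
    (#{a ∈ Fintype.piFinset fun _ : ι => s |
        univ.inf' univ_nonempty a = u ∧ univ.sup' univ_nonempty a = u + j} : R) =
      ((j : R) + 1) ^ Fintype.card ι - 2 * (j : R) ^ Fintype.card ι +
        ((j : R) - 1) ^ Fintype.card ι := by
  rw [card_filter_inf'_sup' R hs]
  have card_Icc : #(Icc u (u + j)) = j + 1 := by rw [Nat.card_Icc]; omega
  have card_Ioo : #(Ioo u (u + j)) = j - 1 := by rw [Nat.card_Ioo, add_tsub_cancel_left]
  simp only [card_Icc, card_Ioo, Nat.card_Ioc, Nat.card_Ico, add_tsub_cancel_left, Nat.cast_add,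
    Nat.cast_one, Nat.cast_sub hj]
  noncomm_ring

theorem sum_piFinset_range_inf'_sup'_eq_sum_card {R : Type*} [Semiring R] (b : ℕ)
    (f : ℕ → ℕ → R) :
    ∑ a ∈ Fintype.piFinset fun _ : ι => range b,
        f (univ.inf' univ_nonempty a) (univ.sup' univ_nonempty a) =
      ∑ v ∈ range b, ∑ u ∈ range (v + 1),
        #{a ∈ Fintype.piFinset fun _ : ι => range b |
          univ.inf' univ_nonempty a = u ∧ univ.sup' univ_nonempty a = v} * f u v := by
  have max_min_mem : ∀ a ∈ Fintype.piFinset fun _ : ι => range b,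
      (⟨univ.sup' univ_nonempty a, univ.inf' univ_nonempty a⟩ : Σ _ : ℕ, ℕ) ∈
        (range b).sigma fun v => range (v + 1) := by
    simp only [Fintype.mem_piFinset, mem_range, mem_sigma, sup'_lt_iff, Order.lt_add_one_iff]
    exact fun a ha => ⟨fun r _ => ha r, (inf'_le a (mem_univ (Classical.arbitrary ι))).trans
      (le_sup' a (mem_univ _))⟩
  rw [← sum_fiberwise_of_maps_to' max_min_mem fun x => f x.2 x.1, sum_sigma]
  simp only [sum_const, nsmul_eq_mul, Sigma.mk.injEq, heq_eq_eq, and_comm]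

theorem sum_range_eq_sum_Icc_one_sub {M : Type*} [AddCommMonoid M] (f : ℕ → M) (v : ℕ) :
    ∑ u ∈ range v, f u = ∑ j ∈ Icc 1 v, f (v - j) := by
  simpa [Ico_add_one_right_eq_Icc] using (sum_Ico_reflect f 1 le_rfl).symm

theorem sum_range_eq_sum_Icc_one_pred {M : Type*} [AddCommMonoid M] {f : ℕ → M} (hf : f 0 = 0)
    (b : ℕ) : ∑ i ∈ range b, f i = ∑ i ∈ Icc 1 (b - 1), f i := by
  refine (sum_subset (by grind) fun i hi hi' => ?_).symm
  obtain rfl : i = 0 := by grind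
  exact hf

theorem sum_piFinset_range_inf'_sup' {R : Type*} [Ring R] (b : ℕ) (f : ℕ → ℕ → R) :
    ∑ a ∈ Fintype.piFinset fun _ : ι => range b,
        f (univ.inf' univ_nonempty a) (univ.sup' univ_nonempty a) =
      ∑ v ∈ range b, f v v + ∑ v ∈ Icc 1 (b - 1), ∑ j ∈ Icc 1 v,
        (((j : R) + 1) ^ Fintype.card ι - 2 * (j : R) ^ Fintype.card ι +
          ((j : R) - 1) ^ Fintype.card ι) * f (v - j) v := by
  rw [sum_piFinset_range_inf'_sup'_eq_sum_card, ← sum_range_eq_sum_Icc_one_pred (by simp),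
    ← sum_add_distrib]
  refine sum_congr rfl fun v hv => ?_
  rw [sum_range_succ, card_filter_inf'_eq_sup' hv, Nat.cast_one, one_mul, add_comm,
    sum_range_eq_sum_Icc_one_sub]
  congr 1
  refine sum_congr rfl fun j hj => ?_
  obtain ⟨hj_pos, hjv⟩ := mem_Icc.1 hj
  obtain ⟨u, rfl⟩ := Nat.exists_eq_add_of_le' hjv
  rw [add_tsub_cancel_right, card_filter_inf'_sup'_add R hj_pos (by grind)]

end MinMaxNat

theorem card_filter_le_and_le_sub {ι κ : Type*} [Fintype ι] [Nonempty ι] [Fintype κ]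
    [DecidableEq κ] (p : κ → Prop) [DecidablePred p] {b : ℕ} {a : ι → ℕ} (ha : ∀ r, a r < b) :
    #{y ∈ Fintype.piFinset fun _ : κ => range b |
        ∀ s r, (p s → y s ≤ a r) ∧ (¬p s → y s ≤ b - 1 - a r)} =
      (univ.inf' univ_nonempty a + 1) ^ #{s | p s} *
        (b - univ.sup' univ_nonempty a) ^ #{s | ¬p s} := by
  have le_iff (k : ℕ) : (∀ r, k ≤ a r) ↔ k < univ.inf' univ_nonempty a + 1 := by
    simp [Order.lt_add_one_iff]
  have le_sub_iff (k : ℕ) : (∀ r, k ≤ b - 1 - a r) ↔ k < b - univ.sup' univ_nonempty a :=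
    calc (∀ r, k ≤ b - 1 - a r) ↔ ∀ r, a r < b - k := forall_congr' fun r => by grind
      _ ↔ univ.sup' univ_nonempty a < b - k := by simp
      _ ↔ k < b - univ.sup' univ_nonempty a := lt_tsub_comm
  have min_lt : univ.inf' univ_nonempty a < b :=
    (inf'_lt_iff _).2 ⟨Classical.arbitrary ι, mem_univ _, ha _⟩
  have hbox : {y ∈ Fintype.piFinset fun _ : κ => range b |
      ∀ s r, (p s → y s ≤ a r) ∧ (¬p s → y s ≤ b - 1 - a r)} =
      Fintype.piFinset fun s => range
        (if p s then univ.inf' univ_nonempty a + 1 else b - univ.sup' univ_nonempty a) := by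
    ext y
    simp only [mem_filter, Fintype.mem_piFinset, mem_range, ← forall_and]
    refine forall_congr' fun s => ?_
    by_cases hp : p s
    · simp only [hp, if_true, true_imp_iff, not_true_eq_false, false_imp_iff, and_true, le_iff]
      omega
    · simp only [hp, if_false, false_imp_iff, not_false_eq_true, true_imp_iff, true_and,
        le_sub_iff]
      omega
  simp [hbox, Fintype.card_piFinset, prod_ite]

theorem stmt_7_general {ι κ : Type*} [Fintype ι] [DecidableEq ι] [Nonempty ι] [Fintype κ]
    [DecidableEq κ] (p : κ → Prop) [DecidablePred p] (b : ℕ) :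
    (#{x ∈ (Fintype.piFinset fun _ : ι => range b) ×ˢ (Fintype.piFinset fun _ : κ => range b) |
        ∀ s r, (p s → x.2 s ≤ x.1 r) ∧ (¬p s → x.2 s ≤ b - 1 - x.1 r)} : ℤ) =
      ∑ i ∈ range b, ((b : ℤ) - i) ^ #{s | ¬p s} * ((i : ℤ) + 1) ^ #{s | p s} +
        ∑ i ∈ Icc 1 (b - 1), ∑ j ∈ Icc 1 i,
          (((j : ℤ) + 1) ^ Fintype.card ι - 2 * (j : ℤ) ^ Fintype.card ι +
              ((j : ℤ) - 1) ^ Fintype.card ι) *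
            (((b : ℤ) - i) ^ #{s | ¬p s} * ((i : ℤ) - j + 1) ^ #{s | p s}) := by
  have cast_count_le (a : ι → ℕ) (ha : a ∈ Fintype.piFinset fun _ => range b) :
      (#{y ∈ Fintype.piFinset fun _ : κ => range b |
          ∀ s r, (p s → y s ≤ a r) ∧ (¬p s → y s ≤ b - 1 - a r)} : ℤ) =
        ((b : ℤ) - ↑(univ.sup' univ_nonempty a)) ^ #{s | ¬p s} *
          (↑(univ.inf' univ_nonempty a) + 1) ^ #{s | p s} := by
    have lt_b : ∀ r, a r < b := by simpa using ha
    have max_le : univ.sup' univ_nonempty a ≤ b := sup'_le _ _ fun r _ => (lt_b r).le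
    rw [card_filter_le_and_le_sub p lt_b, mul_comm]
    simp only [Nat.cast_mul, Nat.cast_pow, Nat.cast_sub max_le, Nat.cast_add, Nat.cast_one]
  rw [card_filter, sum_product]
  simp_rw [← card_filter]
  rw [Nat.cast_sum, sum_congr rfl cast_count_le, sum_piFinset_range_inf'_sup' b fun u v =>
    ((b : ℤ) - v) ^ #{s | ¬p s} * ((u : ℤ) + 1) ^ #{s | p s}]
  congr! 5 with i _ j hj
  rw [Nat.cast_sub (mem_Icc.1 hj).2]

theorem card_filter_le_val (n k : ℕ) : #{i : Fin n | k ≤ (i : ℕ)} = n - k := by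
  simp only [← not_lt, filter_not, card_sdiff_of_subset (filter_subset _ _), card_univ,
    Fintype.card_fin, Fin.card_filter_val_lt]
  omega

/-- Lemma A.4: the number of tuples `(a₀, …, a_{m−1}, b₀, …, b_{2n−1})` with
`0 ≤ a_r ≤ b−1`, `0 ≤ b_s ≤ min_r a_r` for `s ≤ n−1` and `0 ≤ b_s ≤ min_r (b−1−a_r)`
for `n ≤ s ≤ 2n−1`, equals
`Σ_{i=0}^{b−1} ((b−i)(i+1))^n + Σ_{1≤j≤i≤b−1} ((j+1)^m − 2j^m + (j−1)^m)((b−i)(i−j+1))^n`. -/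
theorem stmt_7 (b m n : ℕ) (hb : 0 < b) (hm : 0 < m) (hn : 0 < n) :
    ((((Fintype.piFinset fun _ : Fin m => Finset.range b) ×ˢ
      (Fintype.piFinset fun _ : Fin (2 * n) => Finset.range b)).filter
      (fun x => ∀ s : Fin (2 * n), ∀ r : Fin m,
        ((s : ℕ) < n → x.2 s ≤ x.1 r) ∧ (n ≤ (s : ℕ) → x.2 s ≤ b - 1 - x.1 r))).card : ℤ)
    = ∑ i ∈ Finset.range b, (((b : ℤ) - (i : ℤ)) * ((i : ℤ) + 1)) ^ n
      + ∑ i ∈ Finset.Icc 1 (b - 1), ∑ j ∈ Finset.Icc 1 i,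
          (((j : ℤ) + 1) ^ m - 2 * (j : ℤ) ^ m + ((j : ℤ) - 1) ^ m)
            * (((b : ℤ) - (i : ℤ)) * ((i : ℤ) - (j : ℤ) + 1)) ^ n := by
  have : Nonempty (Fin m) := Fin.pos_iff_nonempty.1 hm
  simpa only [not_lt, Fin.card_filter_val_lt, card_filter_le_val, Fintype.card_fin, ← mul_pow,
    show min (2 * n) n = n by omega, show 2 * n - n = n by omega] using
    stmt_7_general (ι := Fin m) (fun s : Fin (2 * n) => (s : ℕ) < n) b
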